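/- arXiv:1411.4369 — 6 statements merged into one kernel-verified Lean document; each statement's English description precedes it below -/
import Mathlib

section
/- Let N = (B, L, p⁻, p⁺, g⁺) be an LDC network in which generators and loads are on distinct buses, i.e. for every bus v, g⁺(v) > 0 implies p⁺(v) = 0 and p⁺(v) > 0 implies g⁺(v) = 0. Define N' = (B, L, p⁻', p⁺, g⁺', c') by: p⁻'(v) := p⁺(v) for all v ∈ B; for every bus v with p⁺(v) > 0, g⁺'(v) := p⁺(v) − p⁻(v) and c'(v) := 1; for all other buses, g⁺'(v) := g⁺(v) and c'(v) := 0. Then Σ_{v ∈ B} p⁺(v) − MSF(N) = OTS(N'). -/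
open scoped BigOperators ENNReal Classical

/-- A Linear DC (LDC) power network on the finite bus type `V`.
`adj a b` states that there is a line between buses `a` and `b` (it is meant to be
symmetric); `cap`/`sus` give the capacity and susceptance of that line; `pmin`/`pmax`
are the minimum/maximum demand, `gmax` is the maximum generation (`⊤` meaning
unbounded) and `cost` is the generation cost. -/
structure LDCNetwork (V : Type*) [Fintype V] where
  adj : V → V → Prop
  cap : V → V → ℝ
  sus : V → V → ℝ
  pmin : V → ℝ
  pmax : V → ℝ≥0∞
  gmax : V → ℝ≥0∞
  cost : V → ℝ

/-- A candidate switching solution: the set of switched-off lines (as a relation on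
buses), the phase angles `theta`, the generation `gen` and the served demand `dem`. -/
structure LDCSolution (V : Type*) [Fintype V] where
  switched : V → V → Prop
  theta : V → ℝ
  gen : V → ℝ
  dem : V → ℝ

/-- Feasibility of a switching solution `S` for the network `N`: switched-off lines are
lines of the network and switching is symmetric; the flow `sus·(θ a - θ b)` of every
non-switched line is within its capacity; the demand and generation bounds hold; and
Kirchhoff's conservation law holds at every bus. -/
def LDCSolution.IsFeasible {V : Type*} [Fintype V] (S : LDCSolution V)
    (N : LDCNetwork V) : Prop :=
  (∀ a b, S.switched a b → N.adj a b) ∧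
  (∀ a b, S.switched a b → S.switched b a) ∧
  (∀ a b, N.adj a b → ¬ S.switched a b →
      |N.sus a b * (S.theta a - S.theta b)| ≤ N.cap a b) ∧
  (∀ v, N.pmin v ≤ S.dem v ∧ 0 ≤ S.dem v ∧ ENNReal.ofReal (S.dem v) ≤ N.pmax v) ∧
  (∀ v, 0 ≤ S.gen v ∧ ENNReal.ofReal (S.gen v) ≤ N.gmax v) ∧
  (∀ v, (∑ b : V, if N.adj v b ∧ ¬ S.switched v b
          then N.sus v b * (S.theta v - S.theta b) else 0) = S.gen v - S.dem v)

/-- The network `N'` obtained from `N` (whose maximum demand is given by the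
real-valued function `pb`): the minimum demand is fixed to the maximum demand `pb`,
and every load bus additionally gets a generator of cost `1` and maximum generation
`p⁺(v) - p⁻(v)`; all other generators have cost `0`. -/
noncomputable def otsEncoding {V : Type*} [Fintype V] (N : LDCNetwork V) (pb : V → ℝ) :
    LDCNetwork V where
  adj := N.adj
  cap := N.cap
  sus := N.sus
  pmin := pb
  pmax := N.pmax
  gmax := fun v => if 0 < pb v then ENNReal.ofReal (pb v - N.pmin v) else N.gmax v
  cost := fun v => if 0 < pb v then 1 else 0

/-- For an LDC network `N` (with real-valued maximum demand `pb`) in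
which generators and loads are on distinct buses, the maximum switching flow of `N`
and the optimal transmission switching cost of the modified network `N'` satisfy
`∑ v, p⁺ v - MSF N = OTS N'`. -/
theorem total_demand_sub_msf_eq_ots
    (V : Type*) [Fintype V] (N : LDCNetwork V)
    (pb : V → ℝ) (hpb : ∀ v, 0 ≤ pb v)
    (hpmax : ∀ v, N.pmax v = ENNReal.ofReal (pb v))
    (hpmin : ∀ v, 0 ≤ N.pmin v)
    (hsep : ∀ v, (0 < N.gmax v → pb v = 0) ∧ (0 < pb v → N.gmax v = 0))
    (msf ots : ℝ)
    (hmsf : IsGreatest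
      {s : ℝ | ∃ S : LDCSolution V, S.IsFeasible N ∧ s = ∑ v, S.dem v} msf)
    (hots : IsLeast
      {c : ℝ | ∃ S : LDCSolution V, S.IsFeasible (otsEncoding N pb) ∧
        c = ∑ v, (otsEncoding N pb).cost v * S.gen v} ots) :
    (∑ v, pb v) - msf = ots := by
  obtain ⟨⟨S, hS, hSm⟩, hmax⟩ := hmsf
  obtain ⟨⟨T, hT, hTo⟩, hmin⟩ := hots
  obtain ⟨s1, s2, s3, s4, s5, s6⟩ := hS
  obtain ⟨t1, t2, t3, t4, t5, t6⟩ := hT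
  have sd : ∀ v, S.dem v ≤ pb v := fun v => by
    have h := (s4 v).2.2
    rw [hpmax] at h
    exact (ENNReal.ofReal_le_ofReal_iff (hpb v)).1 h
  have hpp : ∀ v, N.pmin v ≤ pb v := fun v => (s4 v).1.trans (sd v)
  have td : ∀ v, T.dem v = pb v := fun v => by
    have h := (t4 v).2.2
    have h1 : pb v ≤ T.dem v := (t4 v).1
    change _ ≤ N.pmax v at h
    rw [hpmax] at h
    exact le_antisymm ((ENNReal.ofReal_le_ofReal_iff (hpb v)).1 h) h1
  have sg : ∀ v, 0 < pb v → S.gen v = 0 := fun v hv => by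
    have h := (s5 v).2
    rw [(hsep v).2 hv] at h
    have := ENNReal.ofReal_eq_zero.1 (le_antisymm h bot_le)
    exact le_antisymm this (s5 v).1
  have tg : ∀ v, 0 < pb v → T.gen v ≤ pb v - N.pmin v := fun v hv => by
    have h := (t5 v).2
    simp only [otsEncoding, if_pos hv] at h
    exact (ENNReal.ofReal_le_ofReal_iff (sub_nonneg.2 (hpp v))).1 h
  apply le_antisymm
  · have key : (∑ v, (pb v - (otsEncoding N pb).cost v * T.gen v)) ≤ msf := by
      apply hmax
      refine ⟨⟨T.switched, T.theta, fun v => if 0 < pb v then 0 else T.gen v,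
        fun v => pb v - (otsEncoding N pb).cost v * T.gen v⟩,
        ⟨t1, t2, t3, fun v => ?_, fun v => ?_, fun v => ?_⟩, rfl⟩
      · have h0 := (t5 v).1
        have h1 := hpmin v
        have h2 := hpp v
        have h3 := hpb v
        rw [hpmax, ENNReal.ofReal_le_ofReal_iff (hpb v)]
        by_cases hv : 0 < pb v
        · have := tg v hv
          simp only [otsEncoding, if_pos hv]
          refine ⟨?_, ?_, ?_⟩ <;> linarith
        · simp only [otsEncoding, if_neg hv]
          refine ⟨?_, ?_, ?_⟩ <;> linarith
      · by_cases hv : 0 < pb v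
        · simp [hv]
        · have h := t5 v
          simpa only [otsEncoding, if_neg hv] using h
      · refine (t6 v).trans ?_
        rw [td v]
        by_cases hv : 0 < pb v
        · simp only [otsEncoding, if_pos hv]
          ring
        · simp only [otsEncoding, if_neg hv]
          ring
    rw [Finset.sum_sub_distrib, ← hTo] at key
    linarith
  · have key : ots ≤ ∑ v, (pb v - S.dem v) := by
      apply hmin
      refine ⟨⟨S.switched, S.theta, fun v => if 0 < pb v then pb v - S.dem v else S.gen v, pb⟩,
        ⟨s1, s2, s3, fun v => ?_, fun v => ?_, fun v => ?_⟩, ?_⟩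
      · exact ⟨le_rfl, hpb v, (hpmax v).ge⟩
      · by_cases hv : 0 < pb v
        · simp only [otsEncoding, if_pos hv]
          exact ⟨sub_nonneg.2 (sd v), ENNReal.ofReal_le_ofReal (by linarith [(s4 v).1])⟩
        · simpa only [otsEncoding, if_neg hv] using s5 v
      · refine (s6 v).trans ?_
        by_cases hv : 0 < pb v
        · simp only [if_pos hv, sg v hv]
          ring
        · simp only [if_neg hv]
          linarith [hpb v, sd v, (s4 v).2.1]
      · refine Finset.sum_congr rfl fun v _ => ?_
        by_cases hv : 0 < pb v
        · simp only [otsEncoding, if_pos hv]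
          ring
        · simp only [otsEncoding, if_neg hv]
          linarith [hpb v, sd v, (s4 v).2.1]
    rw [Finset.sum_sub_distrib, ← hSm] at key
    exact key
end

section
/- Let x > 0 and let S⁻(x,v) be the LDC switch network for x with connector v in which v is an unbounded load. Then there is no feasible switching solution (Lₛ, θ, g, d) of S⁻(x,v) with d(v) > 0. -/
open scoped BigOperators ENNReal Classical

/-- Build an LDC network from a one-directional line specification:
`spec p q = some (c, s)` means that there is a line between buses `p` and `q`
with capacity `c` and susceptance `s`. -/
noncomputable def mkNet {V : Type*} [Fintype V] (spec : V → V → Option (ℝ × ℝ))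
    (pmin : V → ℝ) (pmax gmax : V → ℝ≥0∞) (cost : V → ℝ) : LDCNetwork V where
  adj a b := (spec a b).isSome ∨ (spec b a).isSome
  cap a b := ((spec a b).map Prod.fst).getD (((spec b a).map Prod.fst).getD 0)
  sus a b := ((spec a b).map Prod.snd).getD (((spec b a).map Prod.snd).getD 0)
  pmin := pmin
  pmax := pmax
  gmax := gmax
  cost := cost

/-- Lines of the switch network `S(x,v)`.  Bus `0` is the generator `g`, bus `1` is
the load `l` and bus `2` is the connector `v`: lines `({g,l},2x,1)`, `({g,v},x,1)`
and `({v,l},x,1)`. -/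
noncomputable def switchSpec (x : ℝ) : Fin 3 → Fin 3 → Option (ℝ × ℝ) := fun p q =>
  if p = 0 ∧ q = 1 then some (2 * x, 1)
  else if p = 0 ∧ q = 2 then some (x, 1)
  else if p = 2 ∧ q = 1 then some (x, 1)
  else none

/-- The switch network `S⁻(x,v)` in which the connector `v` (bus `2`) is an unbounded
load: `p⁻(l) = p⁺(l) = 3x`, `g⁺(g) = 3x`, `p⁻(v) = 0`, `p⁺(v) = ⊤`. -/
noncomputable def Sminus (x : ℝ) : LDCNetwork (Fin 3) :=
  mkNet (switchSpec x)
    (fun b => if b = 1 then 3 * x else 0)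
    (fun b => if b = 1 then ENNReal.ofReal (3 * x) else if b = 2 then ⊤ else 0)
    (fun b => if b = 0 then ENNReal.ofReal (3 * x) else 0)
    (fun _ => 0)

/-- In the switch network `S⁻(x,v)` there is no feasible switching
solution in which the connector `v` consumes a positive load. -/
theorem sminus_no_positive_load (x : ℝ) (hx : 0 < x) :
    ¬ ∃ S : LDCSolution (Fin 3), S.IsFeasible (Sminus x) ∧ 0 < S.dem 2 := by
  rintro ⟨S, ⟨-, hsym, -, hd, hg, hk⟩, hpos⟩
  have e01 : S.switched 1 0 ↔ S.switched 0 1 := ⟨hsym _ _, hsym _ _⟩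
  have e02 : S.switched 2 0 ↔ S.switched 0 2 := ⟨hsym _ _, hsym _ _⟩
  have e12 : S.switched 2 1 ↔ S.switched 1 2 := ⟨hsym _ _, hsym _ _⟩
  have k0 := hk 0
  have k1 := hk 1
  have k2 := hk 2
  have d0 := (hd 0).2.1
  have d1 := (hd 1).1
  have g0 : ENNReal.ofReal (S.gen 0) ≤ ENNReal.ofReal (3 * x) := by
    have h := (hg 0).2
    simpa only [Sminus, mkNet, if_true] using h
  have g1 := (hg 1).2
  have g2 := (hg 2).2
  simp [Sminus, mkNet] at d1 g1 g2
  rw [ENNReal.ofReal_le_ofReal_iff (by linarith)] at g0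
  simp [Sminus, mkNet, switchSpec, Fin.sum_univ_three, e01, e02, e12] at k0 k1 k2
  split_ifs at k0 k1 k2 <;> linarith
end

section
/- Let x > 0 and let S⁺(x,v) be the LDC switch network for x with connector v in which v is an unbounded generator. Then the set of values { g(v) : (Lₛ, θ, g, d) is a feasible switching solution of S⁺(x,v) } equals {0, x}. -/
open scoped BigOperators ENNReal Classical

/-- The switch network `S⁺(x,v)` in which the connector `v` (bus `2`) is an unbounded
generator: `p⁻(l) = p⁺(l) = 3x`, `g⁺(g) = 3x`, `g⁺(v) = ⊤`. -/
noncomputable def Splus (x : ℝ) : LDCNetwork (Fin 3) :=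
  mkNet (switchSpec x)
    (fun b => if b = 1 then 3 * x else 0)
    (fun b => if b = 1 then ENNReal.ofReal (3 * x) else 0)
    (fun b => if b = 0 then ENNReal.ofReal (3 * x) else if b = 2 then ⊤ else 0)
    (fun _ => 0)

/-- In the switch network `S⁺(x,v)` the set of possible generation
values of the connector `v` over all feasible switching solutions is exactly `{0, x}`. -/
theorem splus_gen_values (x : ℝ) (hx : 0 < x) :
    {y : ℝ | ∃ S : LDCSolution (Fin 3), S.IsFeasible (Splus x) ∧ y = S.gen 2} =
      {0, x} := by
  ext y
  simp only [Set.mem_setOf_eq, Set.mem_insert_iff, Set.mem_singleton_iff]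
  constructor
  · rintro ⟨S, ⟨h1, h2, h3, h4, h5, h6⟩, rfl⟩
    have s01 := h2 0 1
    have s10 := h2 1 0
    have s12 := h2 1 2
    have s21 := h2 2 1
    have s02 := h2 0 2
    have s20 := h2 2 0
    have c10 := h3 1 0
    have c12 := h3 1 2
    have d1 := (h4 1).1
    have d2 := (h4 2).2
    have g1 := h5 1
    have k1 := h6 1
    have k2 := h6 2
    simp [Splus, mkNet, switchSpec, Fin.sum_univ_three, abs_le] at c10 c12 d1 d2 g1 k1 k2
    have e1 : S.gen 1 = 0 := le_antisymm g1.2 g1.1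
    have e2 : S.dem 2 = 0 := le_antisymm d2.2 d2.1
    rw [e1] at k1
    rw [e2] at k2
    have n10 : ¬ S.switched 1 0 := by
      intro h
      by_cases h' : S.switched 1 2
      · simp [h, h'] at k1; linarith
      · have := c12 h'
        simp [h, h'] at k1; linarith
    have b10 := c10 n10
    have n12 : ¬ S.switched 1 2 := by
      intro h
      simp [h, n10] at k1; linarith
    have b12 := c12 n12
    have n21 : ¬ S.switched 2 1 := fun h => n12 (s21 h)
    simp [n10, n12] at k1
    by_cases h : S.switched 2 0
    · right
      simp [h, n21] at k2; linarith
    · left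
      simp [h, n21] at k2; linarith
  · rintro (rfl | rfl)
    · refine ⟨⟨fun _ _ => False, ![2 * x, 0, x], ![3 * x, 0, 0], ![0, 3 * x, 0]⟩, ?_, by simp⟩
      refine ⟨by simp, by simp, ?_, ?_, ?_, ?_⟩
      · intro a b
        fin_cases a <;> fin_cases b <;> simp [Splus, mkNet, switchSpec, abs_le] <;>
          (try constructor) <;> linarith
      · intro a
        fin_cases a <;> simp [Splus, mkNet, hx.le]
      · intro a
        fin_cases a <;> simp [Splus, mkNet, hx.le]
      · intro a
        fin_cases a <;> simp [Splus, mkNet, switchSpec, Fin.sum_univ_three] <;> ring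
    · refine ⟨⟨fun a b => (a = 0 ∧ b = 2) ∨ (a = 2 ∧ b = 0), ![2 * y, 0, y], ![2 * y, 0, y],
        ![0, 3 * y, 0]⟩, ?_, by simp⟩
      refine ⟨?_, by tauto, ?_, ?_, ?_, ?_⟩
      · rintro a b (⟨rfl, rfl⟩ | ⟨rfl, rfl⟩) <;> simp [Splus, mkNet, switchSpec]
      · intro a b
        fin_cases a <;> fin_cases b <;> simp [Splus, mkNet, switchSpec, abs_le] <;>
          (try constructor) <;> linarith
      · intro a
        fin_cases a <;> simp [Splus, mkNet, hx.le]
      · intro a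
        fin_cases a <;> simp [Splus, mkNet, hx.le]
        gcongr
        norm_num
      · intro a
        fin_cases a <;> simp [Splus, mkNet, switchSpec, Fin.sum_univ_three] <;> ring
end

section
/- Let G = (V, E) be a finite simple graph with distinguished vertices a = v₁ and b = vₙ, n = |V|, and let Net(G) be the associated LDC network. In every feasible switching solution of Net(G), the sum of the flow from g to l on the line ({g,l}, 1, 1/(n+1)) and the flow from b to l on the line ({b,l}, 1, 1) is strictly greater than 1; consequently the line ({g,l}, 1, 1/(n+1)) is never switched off, and in the subgraph of G consisting of the non-switched lines there is at least one path from a to b. -/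
open scoped BigOperators ENNReal Classical

/-- Buses of the network `Net(G)` associated with a graph `G` on vertex set `V`:
the vertices of `G` together with the generators `g` (`ABus.g`), `g'` (`ABus.gp`) and
the loads `l` (`ABus.l`), `l'` (`ABus.lp`). -/
inductive ABus (V : Type*) where
  | vert : V → ABus V
  | g : ABus V
  | l : ABus V
  | gp : ABus V
  | lp : ABus V
  deriving DecidableEq, Fintype

/-- The lines of `Net(G)` where `a` and `b` are the distinguished vertices and
`n = |V|`: a line `({u,v}, 1, 1)` for every edge `{u,v}` of `G`, together with
`({g,a}, 1, 1)`, `({b,l}, 1, 1)`, `({g,l}, 1, 1/(n+1))`, `({g',l'}, n, n)`,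
`({g',l}, 1, 1)` and `({l',l}, 1, 1)`. -/
noncomputable def graphSpec {V : Type*} [Fintype V] (G : SimpleGraph V) (a b : V) :
    ABus V → ABus V → Option (ℝ × ℝ) := fun p q =>
  let n : ℝ := Fintype.card V
  match p, q with
  | .vert u, .vert v => if G.Adj u v then some (1, 1) else none
  | .g, .vert v => if v = a then some (1, 1) else none
  | .vert v, .l => if v = b then some (1, 1) else none
  | .g, .l => some (1, 1 / (n + 1))
  | .gp, .lp => some (n, n)
  | .gp, .l => some (1, 1)
  | .lp, .l => some (1, 1)
  | _, _ => none

/-- The network `Net(G)`: `g⁺(g) = g⁺(g') = ⊤`, `p⁺(l) = p⁺(l') = ⊤`, `p⁻(l) = 3`;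
all other bounds are `0`. -/
noncomputable def graphNet {V : Type*} [Fintype V] (G : SimpleGraph V) (a b : V) :
    LDCNetwork (ABus V) :=
  mkNet (graphSpec G a b)
    (fun p => match p with
      | .l => 3
      | _ => 0)
    (fun p => match p with
      | .l => ⊤
      | .lp => ⊤
      | _ => 0)
    (fun p => match p with
      | .g => ⊤
      | .gp => ⊤
      | _ => 0)
    (fun _ => 0)


lemma ABus.sum_eq {V : Type*} [Fintype V] (f : ABus V → ℝ) :
    ∑ x, f x = (∑ v, f (.vert v)) + f .g + f .l + f .gp + f .lp := by
  let e : ABus V ≃ Option (Option (Option (Option V))) :=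
    { toFun := fun x => match x with
        | .vert v => some (some (some (some v)))
        | .g => some (some (some none))
        | .l => some (some none)
        | .gp => some none
        | .lp => none
      invFun := fun x => match x with
        | some (some (some (some v))) => .vert v
        | some (some (some none)) => .g
        | some (some none) => .l
        | some none => .gp
        | none => .lp
      left_inv := by rintro (_ | _) <;> rfl
      right_inv := by rintro (_ | _ | _ | _ | _) <;> rfl }
  rw [← Equiv.sum_comp e.symm f]
  simp only [Fintype.sum_option]
  simp only [e, Equiv.coe_fn_symm_mk]
  ring

/-- In every feasible switching solution of `Net(G)`, the flow from
`g` to `l` plus the flow from `b` to `l` (a switched-off line carrying no flow) is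
strictly greater than `1`; consequently the line `({g,l}, 1, 1/(n+1))` is never
switched off, and the subgraph of `G` consisting of the non-switched lines contains a
path from `a` to `b`. -/
theorem graphNet_flow_gt_one (V : Type*) [Fintype V] (G : SimpleGraph V)
    (a b : V) (hab : a ≠ b)
    (S : LDCSolution (ABus V)) (hS : S.IsFeasible (graphNet G a b)) :
    1 < (if ¬ S.switched .g .l then
            (graphNet G a b).sus .g .l * (S.theta .g - S.theta .l) else 0) +
        (if ¬ S.switched (.vert b) .l then
            (graphNet G a b).sus (.vert b) .l * (S.theta (.vert b) - S.theta .l)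
          else 0) ∧
    ¬ S.switched .g .l ∧
    Relation.ReflTransGen
      (fun u v : V => G.Adj u v ∧ ¬ S.switched (.vert u) (.vert v)) a b := by
  obtain ⟨-, hsym, hcap, hdem, hgen, hkir⟩ := hS
  have hsw : ∀ p q, S.switched p q ↔ S.switched q p := fun p q => ⟨hsym p q, hsym q p⟩
  have hsusgl : (graphNet G a b).sus .g .l = 1 / ((Fintype.card V : ℝ) + 1) := by
    simp [graphNet, mkNet, graphSpec]
  have hsusbl : (graphNet G a b).sus (.vert b) .l = 1 := by
    simp [graphNet, mkNet, graphSpec]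
  rw [hsusgl, hsusbl]
  set n : ℝ := (Fintype.card V : ℝ) with hn
  -- balance at l
  have kl := hkir .l
  have klp := hkir .lp
  have gl : S.gen .l = 0 := by
    have := hgen .l
    simp [graphNet, mkNet] at this
    linarith
  have glp : S.gen .lp = 0 := by
    have := hgen .lp
    simp [graphNet, mkNet] at this
    linarith
  have gv : ∀ v, S.gen (.vert v) = 0 := by
    intro v
    have := hgen (.vert v)
    simp [graphNet, mkNet] at this
    linarith
  have dv : ∀ v, S.dem (.vert v) = 0 := by
    intro v
    have := hdem (.vert v)
    simp [graphNet, mkNet] at this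
    linarith
  have dl : 3 ≤ S.dem .l := (hdem .l).1
  have dlp : 0 ≤ S.dem .lp := (hdem .lp).2.1
  have cgl := hcap .g .l (by simp [graphNet, mkNet, graphSpec])
  have cbl := hcap (.vert b) .l (by simp [graphNet, mkNet, graphSpec])
  have cgpl := hcap .gp .l (by simp [graphNet, mkNet, graphSpec])
  have clpl := hcap .lp .l (by simp [graphNet, mkNet, graphSpec])
  rw [ABus.sum_eq] at kl klp
  simp [graphNet, mkNet, graphSpec, ← hn, gl, glp] at kl klp cgl cbl cgpl clpl
  have hsb : (∑ x, if x = b ∧ ¬S.switched ABus.l (ABus.vert x) then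
              (if x = b then some (1:ℝ) else none).getD 0 *
                (S.theta ABus.l - S.theta (ABus.vert x))
            else 0) = if S.switched (.vert b) .l then 0 else S.theta .l - S.theta (.vert b) := by
    rw [Finset.sum_eq_single b]
    · simp [hsw .l (.vert b)]
    · intro x _ hx
      simp [hx]
    · simp
  rw [hsb, hsw .l .g, hsw .l .gp, hsw .l .lp] at kl
  have hn0 : 0 < n + 1 := by positivity
  rw [abs_of_pos hn0] at cgl
  -- abstract the two flows
  set f1 : ℝ := (if ¬S.switched ABus.g ABus.l then
    1 / (n + 1) * (S.theta ABus.g - S.theta ABus.l) else 0) with hf1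
  set f2 : ℝ := (if ¬S.switched (ABus.vert b) ABus.l then
    1 * (S.theta (ABus.vert b) - S.theta ABus.l) else 0) with hf2
  have e1 : (if S.switched ABus.g ABus.l then 0
      else (n + 1)⁻¹ * (S.theta ABus.l - S.theta ABus.g)) = - f1 := by
    rw [hf1]; by_cases h : S.switched ABus.g ABus.l <;> simp [h]; ring
  have e2 : (if S.switched (.vert b) .l then 0 else S.theta .l - S.theta (.vert b)) = - f2 := by
    rw [hf2]; by_cases h : S.switched (.vert b) .l <;> simp [h]
  rw [e1, e2] at kl
  have b1 : f1 ≤ 1 := by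
    rw [hf1]; by_cases h : S.switched ABus.g ABus.l
    · simp [h]
    · simp only [h, not_false_eq_true, if_true]
      refine le_trans ?_ (cgl h)
      rw [one_div]
      exact mul_le_mul_of_nonneg_left (le_abs_self _) (by positivity)
  have b2 : f2 ≤ 1 := by
    rw [hf2]; by_cases h : S.switched (.vert b) .l
    · simp [h]
    · simp only [h, not_false_eq_true, if_true, one_mul]
      exact le_trans (le_abs_self _) (cbl h)
  have key : 1 < f1 + f2 := by
    by_contra hle
    push Not at hle
    by_cases h3 : S.switched .gp .l
    · by_cases h4 : S.switched .lp .l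
      · simp only [h3, h4, if_true] at kl
        linarith
      · simp only [h3, h4, if_true, if_false] at kl
        have := abs_le.1 (clpl h4)
        linarith
    · have t3 := abs_le.1 (cgpl h3)
      by_cases h4 : S.switched .lp .l
      · simp only [h3, h4, if_true, if_false] at kl
        linarith
      · have t4 := abs_le.1 (clpl h4)
        simp only [h3, h4, if_false] at kl klp
        have h5 : S.theta .lp = S.theta .gp := by linarith
        rw [h5] at klp
        simp at klp
        linarith
  refine ⟨key, ?_, ?_⟩
  · intro h
    have : f1 = 0 := by rw [hf1]; simp [h]
    linarith
  · by_contra hr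
    have f2pos : 0 < f2 := by linarith
    let R : V → Prop := fun x => Relation.ReflTransGen
      (fun u v : V => G.Adj u v ∧ ¬ S.switched (.vert u) (.vert v)) a x
    let F : V → V → ℝ := fun u v => if G.Adj u v ∧ ¬ S.switched (.vert u) (.vert v) then
      S.theta (.vert u) - S.theta (.vert v) else 0
    have hF : ∀ u v, F u v = - F v u := by
      intro u v
      simp only [F, G.adj_comm u v, hsw (.vert u) (.vert v)]
      split_ifs <;> simp
    have hcut : ∀ u v, ¬ R u → R v → F u v = 0 := by
      intro u v hu hv
      simp only [F]
      rw [if_neg]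
      rintro ⟨h1, h2⟩
      exact hu (hv.tail ⟨h1.symm, fun h => h2 (hsym _ _ h)⟩)
    let T : Finset V := Finset.univ.filter (fun v => ¬ R v)
    have hk : ∀ v ∈ T, (∑ w ∈ T, F v w) + (if v = b then f2 else 0) = 0 := by
      intro v hv
      have hv' : ¬ R v := by simpa [T] using hv
      have hva : v ≠ a := by rintro rfl; exact hv' Relation.ReflTransGen.refl
      have k := hkir (.vert v)
      rw [ABus.sum_eq, gv, dv] at k
      have q1 : (∑ w ∈ T, F v w) = ∑ w, F v w := by
        apply Finset.sum_subset (Finset.subset_univ _)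
        intro w _ hw
        exact hcut v w hv' (by simpa [T] using hw)
      rw [q1]
      have q2 : ∀ w, (if (graphNet G a b).adj (.vert v) (.vert w) ∧
          ¬ S.switched (.vert v) (.vert w) then (graphNet G a b).sus (.vert v) (.vert w) *
            (S.theta (.vert v) - S.theta (.vert w)) else 0) = F v w := by
        intro w
        by_cases h : G.Adj v w
        · simp [F, graphNet, mkNet, graphSpec, h]
        · simp [F, graphNet, mkNet, graphSpec, h, G.adj_comm w v]
      simp only [q2] at k
      by_cases hb : v = b
      · subst hb
        simp [graphNet, mkNet, graphSpec, hva] at k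
        simp [hf2]
        linarith
      · simp [graphNet, mkNet, graphSpec, hva, hb] at k
        simp [hb, k]
    have hsum := Finset.sum_eq_zero hk
    rw [Finset.sum_add_distrib] at hsum
    have hz : ∑ v ∈ T, ∑ w ∈ T, F v w = 0 := by
      have h1 : ∑ v ∈ T, ∑ w ∈ T, F v w = - ∑ v ∈ T, ∑ w ∈ T, F v w := by
        conv_rhs => rw [Finset.sum_comm]
        simp only [← Finset.sum_neg_distrib]
        exact Finset.sum_congr rfl fun v _ => Finset.sum_congr rfl fun w _ => hF v w
      linarith
    have hbT : b ∈ T := by simpa [T] using hr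
    rw [hz, Finset.sum_ite_eq' T b, if_pos hbT] at hsum
    linarith
end

section
/- Let G = (V, E) be a finite simple graph with distinguished vertices a = v₁ and b = vₙ, n = |V|, and let Net(G) be the associated LDC network. Let (Lₛ, θ, g, d) be a feasible switching solution of Net(G) and suppose that in the subgraph of G formed by the non-switched edge-lines there is a path from a to b of length t (number of edges). Then the flow from g to l on the line ({g,l}, 1, 1/(n+1)) is at most (t+2)/(n+1), and the generation at g satisfies g(g) ≤ 1 + (t+2)/(n+1). -/
open scoped BigOperators ENNReal Classical

def abusEquiv (V : Type*) : Option (Option (Option (Option V))) ≃ ABus V where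
  toFun x := match x with
    | none => .g
    | some none => .l
    | some (some none) => .gp
    | some (some (some none)) => .lp
    | some (some (some (some v))) => .vert v
  invFun x := match x with
    | .g => none
    | .l => some none
    | .gp => some (some none)
    | .lp => some (some (some none))
    | .vert v => some (some (some (some v)))
  left_inv x := by
    rcases x with _ | _ | _ | _ | _ <;> rfl
  right_inv x := by cases x <;> rfl

theorem abus_sum {V : Type*} [Fintype V] (f : ABus V → ℝ) :
    ∑ p, f p = f .g + (f .l + (f .gp + (f .lp + ∑ v, f (.vert v)))) := by
  rw [← (abusEquiv V).sum_comp f]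
  simp only [Fintype.sum_option]
  rfl

theorem path_theta {V : Type*} (th : V → ℝ) :
    ∀ (t : ℕ) (τ : Fin (t + 1) → V),
    (∀ i : Fin t, th (τ i.castSucc) - th (τ i.succ) ≤ 1) →
    th (τ 0) - th (τ (Fin.last t)) ≤ t := by
  intro t
  induction t with
  | zero => intro τ _; simp
  | succ k ih =>
    intro τ h
    have h1 := ih (fun i => τ i.castSucc) (fun i => h i.castSucc)
    have h2 := h (Fin.last k)
    simp only [Fin.castSucc_zero, Fin.succ_last] at h1 h2
    push_cast
    linarith

set_option maxHeartbeats 1000000 in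
/-- If a feasible switching solution of `Net(G)` leaves non-switched
a path `τ` from `a` to `b` in `G` of length `t`, then the flow from `g` to `l` on the
line `({g,l}, 1, 1/(n+1))` is at most `(t+2)/(n+1)` and the generation at `g` is at
most `1 + (t+2)/(n+1)`. -/
theorem graphNet_gen_g_bound (V : Type*) [Fintype V] (G : SimpleGraph V)
    (a b : V) (hab : a ≠ b)
    (S : LDCSolution (ABus V)) (hS : S.IsFeasible (graphNet G a b))
    (t : ℕ) (τ : Fin (t + 1) → V) (hinj : Function.Injective τ)
    (hfirst : τ 0 = a) (hlast : τ (Fin.last t) = b)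
    (hpath : ∀ i : Fin t, G.Adj (τ i.castSucc) (τ i.succ) ∧
      ¬ S.switched (.vert (τ i.castSucc)) (.vert (τ i.succ))) :
    (graphNet G a b).sus .g .l * (S.theta .g - S.theta .l) ≤
        ((t : ℝ) + 2) / ((Fintype.card V : ℝ) + 1) ∧
    S.gen .g ≤ 1 + ((t : ℝ) + 2) / ((Fintype.card V : ℝ) + 1) := by
  obtain ⟨-, hsym, hcap, hdem, hgen, hk⟩ := hS
  have hsw : ∀ p q, S.switched p q ↔ S.switched q p := fun p q => ⟨hsym p q, hsym q p⟩
  have hn : (1 : ℝ) ≤ Fintype.card V := by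
    have : 0 < Fintype.card V := Fintype.card_pos_iff.mpr ⟨a⟩
    exact_mod_cast this
  have hsus : (graphNet G a b).sus .g .l = 1 / ((Fintype.card V : ℝ) + 1) := rfl
  -- path part
  have hp : S.theta (.vert a) - S.theta (.vert b) ≤ t := by
    rw [← hfirst, ← hlast]
    refine path_theta (fun v => S.theta (.vert v)) t τ fun i => ?_
    obtain ⟨h1, h2⟩ := hpath i
    have := hcap _ _ (by simp [graphNet, mkNet, graphSpec, h1]) h2
    simp [graphNet, mkNet, graphSpec, h1] at this
    exact (abs_le.mp this).2
  -- capacities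
  have cga : ¬ S.switched .g (.vert a) → |S.theta .g - S.theta (.vert a)| ≤ 1 := fun h => by
    simpa [graphNet, mkNet, graphSpec] using
      hcap .g (.vert a) (by simp [graphNet, mkNet, graphSpec]) h
  have cbl : ¬ S.switched (.vert b) .l → |S.theta (.vert b) - S.theta .l| ≤ 1 := fun h => by
    simpa [graphNet, mkNet, graphSpec] using
      hcap (.vert b) .l (by simp [graphNet, mkNet, graphSpec]) h
  have cgl : ¬ S.switched .g .l →
      |1 / ((Fintype.card V : ℝ) + 1) * (S.theta .g - S.theta .l)| ≤ 1 := fun h =>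
      hcap .g .l (by simp [graphNet, mkNet, graphSpec]) h
  have cpl : ¬ S.switched .gp .l → |S.theta .gp - S.theta .l| ≤ 1 := fun h => by
    simpa [graphNet, mkNet, graphSpec] using
      hcap .gp .l (by simp [graphNet, mkNet, graphSpec]) h
  have cql : ¬ S.switched .lp .l → |S.theta .lp - S.theta .l| ≤ 1 := fun h => by
    simpa [graphNet, mkNet, graphSpec] using
      hcap .lp .l (by simp [graphNet, mkNet, graphSpec]) h
  -- bounds
  have dl : 3 ≤ S.dem .l := (hdem .l).1
  have gl : S.gen .l = 0 := le_antisymm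
    (by simpa [graphNet, mkNet] using (hgen .l).2) (hgen .l).1
  have glp : S.gen .lp = 0 := le_antisymm
    (by simpa [graphNet, mkNet] using (hgen .lp).2) (hgen .lp).1
  have dlp : 0 ≤ S.dem .lp := (hdem .lp).2.1
  have dg : S.dem .g = 0 := le_antisymm
    (by simpa [graphNet, mkNet] using (hdem .g).2.2) (hdem .g).2.1
  have gv : ∀ v, S.gen (.vert v) = 0 := fun v => le_antisymm
    (by simpa [graphNet, mkNet] using (hgen (.vert v)).2) (hgen (.vert v)).1
  have dv : ∀ v, S.dem (.vert v) = 0 := fun v => le_antisymm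
    (by simpa [graphNet, mkNet] using (hdem (.vert v)).2.2) (hdem (.vert v)).2.1
  -- flows
  have kg := hk .g
  have kl := hk .l
  have kq := hk .lp
  have kv := fun v => hk (.vert v)
  rw [abus_sum] at kg kl kq
  simp only [abus_sum] at kv
  have eg : (if S.switched .g .l then 0 else
      1 / ((Fintype.card V : ℝ) + 1) * (S.theta .g - S.theta .l)) +
      (if S.switched .g (.vert a) then 0 else S.theta .g - S.theta (.vert a)) = S.gen .g := by
    rw [dg, sub_zero] at kg
    rw [← kg]
    have : ∀ v : V, (if (graphNet G a b).adj .g (.vert v) ∧ ¬ S.switched .g (.vert v) then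
        (graphNet G a b).sus .g (.vert v) * (S.theta .g - S.theta (.vert v)) else 0) =
        if v = a then (if S.switched .g (.vert a) then 0 else
          S.theta .g - S.theta (.vert a)) else 0 := by
      intro v
      by_cases hv : v = a
      · subst hv; simp [graphNet, mkNet, graphSpec, ite_not]
      · simp [graphNet, mkNet, graphSpec, hv]
    rw [Finset.sum_congr rfl (fun v _ => this v)]
    simp [graphNet, mkNet, graphSpec, ite_not]
  have el : (if S.switched .g .l then 0 else
      1 / ((Fintype.card V : ℝ) + 1) * (S.theta .g - S.theta .l)) +
      (if S.switched (.vert b) .l then 0 else S.theta (.vert b) - S.theta .l) +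
      (if S.switched .gp .l then 0 else S.theta .gp - S.theta .l) +
      (if S.switched .lp .l then 0 else S.theta .lp - S.theta .l) = S.dem .l := by
    rw [gl, zero_sub] at kl
    have : ∀ v : V, (if (graphNet G a b).adj .l (.vert v) ∧ ¬ S.switched .l (.vert v) then
        (graphNet G a b).sus .l (.vert v) * (S.theta .l - S.theta (.vert v)) else 0) =
        if v = b then - (if S.switched (.vert b) .l then 0 else
          S.theta (.vert b) - S.theta .l) else 0 := by
      intro v
      by_cases hv : v = b
      · subst hv
        rw [hsw .l]
        by_cases h : S.switched (.vert v) .l <;> simp [graphNet, mkNet, graphSpec, h]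
      · simp [graphNet, mkNet, graphSpec, hv]
    rw [Finset.sum_congr rfl (fun v _ => this v)] at kl
    rw [hsw .l .g, hsw .l .gp, hsw .l .lp] at kl
    simp [graphNet, mkNet, graphSpec, ite_not] at kl
    simp only [one_div]
    clear kg kq kv
    split_ifs at kl ⊢ <;> linarith
  have eq : (if S.switched .lp .l then 0 else S.theta .lp - S.theta .l) +
      (if S.switched .gp .lp then 0 else
        (Fintype.card V : ℝ) * (S.theta .lp - S.theta .gp)) = - S.dem .lp := by
    rw [glp, zero_sub] at kq
    rw [hsw .lp .gp] at kq
    rw [← kq]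
    simp [graphNet, mkNet, graphSpec, ite_not]
  have ev : (if S.switched (.vert b) .l then 0 else S.theta (.vert b) - S.theta .l) =
      (if S.switched .g (.vert a) then 0 else S.theta .g - S.theta (.vert a)) := by
    have hF : ∀ v : V, (if v = a then - (if S.switched .g (.vert a) then 0 else
          S.theta .g - S.theta (.vert a)) else 0) +
        (if v = b then (if S.switched (.vert b) .l then 0 else
          S.theta (.vert b) - S.theta .l) else 0) +
        ∑ w, (if G.Adj v w ∧ ¬ S.switched (.vert v) (.vert w) then
          S.theta (.vert v) - S.theta (.vert w) else 0) = 0 := by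
      intro v
      have h := kv v
      rw [gv, dv, sub_zero] at h
      have h0 : ∀ w : V, (if (graphNet G a b).adj (.vert v) (.vert w) ∧
          ¬ S.switched (.vert v) (.vert w) then (graphNet G a b).sus (.vert v) (.vert w) *
            (S.theta (.vert v) - S.theta (.vert w)) else 0) =
          (if G.Adj v w ∧ ¬ S.switched (.vert v) (.vert w) then
          S.theta (.vert v) - S.theta (.vert w) else 0) := by
        intro w
        by_cases hw : G.Adj v w
        · simp [graphNet, mkNet, graphSpec, hw]
        · have hw2 : ¬ G.Adj w v := fun h => hw h.symm
          simp [graphNet, mkNet, graphSpec, hw, hw2]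
      rw [Finset.sum_congr rfl (fun w _ => h0 w), hsw (.vert v) .g] at h
      have h1 : (if (graphNet G a b).adj (.vert v) .g ∧ ¬ S.switched .g (.vert v) then
          (graphNet G a b).sus (.vert v) .g * (S.theta (.vert v) - S.theta .g) else 0) =
          (if v = a then - (if S.switched .g (.vert a) then 0 else
          S.theta .g - S.theta (.vert a)) else 0) := by
        by_cases hv : v = a
        · subst hv
          by_cases h : S.switched .g (.vert v) <;> simp [graphNet, mkNet, graphSpec, h]
        · simp [graphNet, mkNet, graphSpec, hv]
      have h2 : (if (graphNet G a b).adj (.vert v) .l ∧ ¬ S.switched (.vert v) .l then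
          (graphNet G a b).sus (.vert v) .l * (S.theta (.vert v) - S.theta .l) else 0) =
          (if v = b then (if S.switched (.vert b) .l then 0 else
          S.theta (.vert b) - S.theta .l) else 0) := by
        by_cases hv : v = b
        · subst hv
          by_cases h : S.switched (.vert v) .l <;> simp [graphNet, mkNet, graphSpec, h]
        · simp [graphNet, mkNet, graphSpec, hv]
      have h3 : (if (graphNet G a b).adj (.vert v) .gp ∧ ¬ S.switched (.vert v) .gp then
          (graphNet G a b).sus (.vert v) .gp * (S.theta (.vert v) - S.theta .gp) else 0) = 0 := by
        simp [graphNet, mkNet, graphSpec]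
      have h4 : (if (graphNet G a b).adj (.vert v) .lp ∧ ¬ S.switched (.vert v) .lp then
          (graphNet G a b).sus (.vert v) .lp * (S.theta (.vert v) - S.theta .lp) else 0) = 0 := by
        simp [graphNet, mkNet, graphSpec]
      rw [h1, h2, h3, h4] at h
      linarith
    have hsum := Finset.sum_eq_zero (s := Finset.univ) (fun v _ => hF v)
    rw [Finset.sum_add_distrib, Finset.sum_add_distrib] at hsum
    have hanti : ∑ v : V, ∑ w : V, (if G.Adj v w ∧ ¬ S.switched (.vert v) (.vert w) then
          S.theta (.vert v) - S.theta (.vert w) else 0) = 0 := by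
      have hc := Finset.sum_comm (s := Finset.univ) (t := Finset.univ)
        (f := fun v w : V => (if G.Adj v w ∧ ¬ S.switched (.vert v) (.vert w) then
          S.theta (.vert v) - S.theta (.vert w) else 0))
      have hm : ∀ v w : V, (if G.Adj w v ∧ ¬ S.switched (.vert w) (.vert v) then
          S.theta (.vert w) - S.theta (.vert v) else 0) =
          - (if G.Adj v w ∧ ¬ S.switched (.vert v) (.vert w) then
          S.theta (.vert v) - S.theta (.vert w) else 0) := by
        intro v w
        rw [G.adj_comm w v, hsw (.vert w) (.vert v)]
        split_ifs <;> ring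
      have hc2 : ∑ w : V, ∑ v : V, (if G.Adj v w ∧ ¬ S.switched (.vert v) (.vert w) then
          S.theta (.vert v) - S.theta (.vert w) else 0) =
          - ∑ v : V, ∑ w : V, (if G.Adj v w ∧ ¬ S.switched (.vert v) (.vert w) then
          S.theta (.vert v) - S.theta (.vert w) else 0) := by
        simp only [← Finset.sum_neg_distrib]
        exact Finset.sum_congr rfl fun v _ => Finset.sum_congr rfl fun w _ => hm v w
      linarith
    rw [hanti, Finset.sum_ite_eq' Finset.univ a, Finset.sum_ite_eq' Finset.univ b] at hsum
    simp only [Finset.mem_univ, if_true] at hsum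
    linarith
  clear kg kl kq kv
  rw [hsus]
  have htri : (if S.switched .gp .l then 0 else S.theta .gp - S.theta .l) +
      (if S.switched .lp .l then 0 else S.theta .lp - S.theta .l) < 2 := by
    by_cases h1 : S.switched .gp .l
    · simp only [h1, if_true]
      split_ifs with h2
      · norm_num
      · have := (abs_le.mp (cql h2)).2
        linarith
    · have c1 := (abs_le.mp (cpl h1)).2
      by_cases h2 : S.switched .lp .l
      · simp only [h1, h2, if_true, if_false]
        linarith
      · have c2 := (abs_le.mp (cql h2)).2
        simp only [h1, h2, if_false] at eq ⊢
        by_cases h3 : S.switched .gp .lp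
        · simp only [h3, if_true] at eq
          linarith
        · simp only [h3, if_false] at eq
          by_contra hcon
          have e1 : S.theta .gp - S.theta .l = 1 := by linarith
          have e2 : S.theta .lp - S.theta .l = 1 := by linarith
          have e3 : S.theta .lp - S.theta .gp = 0 := by linarith
          rw [e3, e2] at eq
          linarith
  have hbl : ¬ S.switched (.vert b) .l := by
    intro h
    simp only [h, if_true] at el
    by_cases h2 : S.switched .g .l
    · simp only [h2, if_true] at el
      linarith
    · have := (abs_le.mp (cgl h2)).2
      simp only [h2, if_false] at el
      linarith
  have hga : ¬ S.switched .g (.vert a) := by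
    intro h
    simp only [h, if_true] at ev
    rw [ev] at el
    by_cases h2 : S.switched .g .l
    · simp only [h2, if_true] at el
      linarith
    · have := (abs_le.mp (cgl h2)).2
      simp only [h2, if_false] at el
      linarith
  have b1 := (abs_le.mp (cga hga)).2
  have b2 := (abs_le.mp (cbl hbl)).2
  have key : 1 / ((Fintype.card V : ℝ) + 1) * (S.theta .g - S.theta .l) ≤
      ((t : ℝ) + 2) / ((Fintype.card V : ℝ) + 1) := by
    rw [one_div_mul_eq_div]
    gcongr
    linarith
  refine ⟨key, ?_⟩
  simp only [hga, if_false] at eg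
  have pos : 0 ≤ ((t : ℝ) + 2) / ((Fintype.card V : ℝ) + 1) := by positivity
  split_ifs at eg <;> linarith
end

section
/- Let (X, Y, W, δ) be an instance of the minimum 3-dimensional assignment problem with pairwise disjoint finite sets X, Y, W of equal cardinality and cost function δ : X×Y×W → ℕ, and let ANet(X,Y,W,δ) be the associated LDC network. For every assignment A ⊆ X×Y×W there exists a feasible switching solution of ANet(X,Y,W,δ) whose total generation cost Σ_{v} c(v)·g(v) equals Σ_{t ∈ A} δ(t). In particular OTS(ANet(X,Y,W,δ)) ≤ M3DA(X,Y,W,δ). -/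
open scoped BigOperators ENNReal Classical

/-- Membership of an element `r` of `R = X ∪ Y ∪ W` in a triple `t ∈ T = X × Y × W`. -/
def memTriple {X Y Z : Type*} : X ⊕ Y ⊕ Z → X × Y × Z → Prop
  | .inl x, (x', _, _) => x = x'
  | .inr (.inl y), (_, y', _) => y = y'
  | .inr (.inr z), (_, _, z') => z = z'

/-- An assignment for the 3-dimensional assignment instance: a set `A ⊆ T` of triples
such that every element of `R = X ∪ Y ∪ W` belongs to exactly one triple of `A`. -/
def IsAssignment {X Y Z : Type*} (A : Finset (X × Y × Z)) : Prop :=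
  ∀ r : X ⊕ Y ⊕ Z, ∃! t : X × Y × Z, t ∈ A ∧ memTriple r t

/-- Buses of the assignment network `ANet(X,Y,W,δ)`: the load `l`, a bus for every
`r ∈ R = X ∪ Y ∪ W`, and buses `t`, `t_g`, `t_d` for every triple `t ∈ T`. -/
inductive MBus (X Y Z : Type*) where
  | l : MBus X Y Z
  | r : X ⊕ Y ⊕ Z → MBus X Y Z
  | t : X × Y × Z → MBus X Y Z
  | tg : X × Y × Z → MBus X Y Z
  | td : X × Y × Z → MBus X Y Z
  deriving DecidableEq, Fintype

/-- The lines of `ANet(X,Y,W,δ)`: `({r,l}, 1, 1)` for each `r ∈ R`, and for each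
`t ∈ T` the lines `({t,t_g}, 3, 1)`, `({t,l}, 5, 1)`, `({t,t_d}, 3, 1)` together with
`({t_d,r}, 1, 1)` for each `r ∈ t`. -/
noncomputable def assignSpec (X Y Z : Type*) :
    MBus X Y Z → MBus X Y Z → Option (ℝ × ℝ) := fun p q =>
  match p, q with
  | .r _, .l => some (1, 1)
  | .t t, .tg t' => if t = t' then some (3, 1) else none
  | .t _, .l => some (5, 1)
  | .t t, .td t' => if t = t' then some (3, 1) else none
  | .td t, .r r => if memTriple r t then some (1, 1) else none
  | _, _ => none

/-- The assignment network `ANet(X,Y,W,δ)`: `g⁺(t) = 3` with cost `δ(t)/3` and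
`g⁺(t_g) = 5` with cost `0` for every `t ∈ T`, and `p⁻(l) = p⁺(l) = 3|T| + |R|`;
all other bounds are `0`. -/
noncomputable def assignNet (X Y Z : Type*) [Fintype X] [Fintype Y] [Fintype Z]
    (δ : X × Y × Z → ℕ) : LDCNetwork (MBus X Y Z) :=
  mkNet (assignSpec X Y Z)
    (fun p => match p with
      | .l => 3 * (Fintype.card (X × Y × Z) : ℝ) + (Fintype.card (X ⊕ Y ⊕ Z) : ℝ)
      | _ => 0)
    (fun p => match p with
      | .l => ENNReal.ofReal
          (3 * (Fintype.card (X × Y × Z) : ℝ) + (Fintype.card (X ⊕ Y ⊕ Z) : ℝ))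
      | _ => 0)
    (fun p => match p with
      | .t _ => (3 : ℝ≥0∞)
      | .tg _ => (5 : ℝ≥0∞)
      | _ => 0)
    (fun p => match p with
      | .t t => (δ t : ℝ) / 3
      | _ => 0)

theorem busSum_split {X Y Z : Type*} [Fintype X] [Fintype Y] [Fintype Z]
    (f : MBus X Y Z → ℝ) :
    ∑ v, f v = f .l + ∑ r, f (.r r) + ∑ t, f (.t t) + ∑ t, f (.tg t) + ∑ t, f (.td t) := by
  let e : (Unit ⊕ (X ⊕ Y ⊕ Z) ⊕ (X × Y × Z) ⊕ (X × Y × Z) ⊕ (X × Y × Z)) ≃ MBus X Y Z :=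
    { toFun := fun s => match s with
        | .inl _ => .l
        | .inr (.inl r) => .r r
        | .inr (.inr (.inl t)) => .t t
        | .inr (.inr (.inr (.inl t))) => .tg t
        | .inr (.inr (.inr (.inr t))) => .td t
      invFun := fun b => match b with
        | .l => .inl ()
        | .r r => .inr (.inl r)
        | .t t => .inr (.inr (.inl t))
        | .tg t => .inr (.inr (.inr (.inl t)))
        | .td t => .inr (.inr (.inr (.inr t)))
      left_inv := by rintro (_ | _ | _ | _ | _) <;> rfl
      right_inv := by rintro (_ | _ | _ | _ | _) <;> rfl }
  rw [← e.sum_comp f]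
  simp only [Fintype.sum_sum_type, Finset.univ_unique, Finset.sum_singleton, e, Equiv.coe_fn_mk]
  ring

theorem sum_one_ite {α : Type*} [Fintype α] (a : α) (c : ℝ) (p : α → Prop) [DecidablePred p]
    (h : ∀ x, p x ↔ x = a) : ∑ x, (if p x then c else 0) = c := by
  rw [Finset.sum_eq_single a]
  · rw [if_pos ((h a).2 rfl)]
  · intro b _ hb
    rw [if_neg]
    exact fun hp => hb ((h b).1 hp)
  · simp

theorem memTriple_sum {X Y Z : Type*} [Fintype X] [Fintype Y] [Fintype Z]
    (t : X × Y × Z) (c : ℝ) :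
    ∑ r : X ⊕ Y ⊕ Z, (if memTriple r t then c else 0) = 3 * c := by
  obtain ⟨x, y, z⟩ := t
  rw [Fintype.sum_sum_type, Fintype.sum_sum_type]
  rw [sum_one_ite x c, sum_one_ite y c, sum_one_ite z c]
  · ring
  all_goals intro _; exact Iff.rfl

theorem assign_sum {X Y Z : Type*} [Fintype X] [Fintype Y] [Fintype Z]
    (A : Finset (X × Y × Z)) (hA : IsAssignment A) (r : X ⊕ Y ⊕ Z) (c : ℝ) :
    ∑ t : X × Y × Z, (if memTriple r t ∧ t ∈ A then c else 0) = c := by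
  obtain ⟨t, ht, hu⟩ := hA r
  rw [Finset.sum_eq_single t]
  · rw [if_pos ⟨ht.2, ht.1⟩]
  · intro b _ hb
    rw [if_neg]
    rintro ⟨h1, h2⟩
    exact hb (hu b ⟨h2, h1⟩)
  · simp

theorem assign_card {X Y Z : Type*} [Fintype X] [Fintype Y] [Fintype Z]
    (A : Finset (X × Y × Z)) (hA : IsAssignment A) :
    (Fintype.card (X ⊕ Y ⊕ Z) : ℝ) = 3 * ∑ t : X × Y × Z, (if t ∈ A then (1 : ℝ) else 0) := by
  have h1 : ∑ r : X ⊕ Y ⊕ Z, ∑ t : X × Y × Z, (if memTriple r t ∧ t ∈ A then (1 : ℝ) else 0)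
      = Fintype.card (X ⊕ Y ⊕ Z) := by
    rw [Finset.sum_congr rfl (fun r _ => assign_sum A hA r 1)]
    rw [Finset.sum_const, Finset.card_univ, nsmul_eq_mul, mul_one]
  rw [← h1, Finset.sum_comm, Finset.mul_sum]
  refine Finset.sum_congr rfl fun t _ => ?_
  by_cases h : t ∈ A
  · simp only [h, and_true, if_true]
    exact memTriple_sum t 1
  · simp [h]

/-- the switching solution attached to an assignment -/
noncomputable def asgSol {X Y Z : Type*} [Fintype X] [Fintype Y] [Fintype Z]
    (A : Finset (X × Y × Z)) : LDCSolution (MBus X Y Z) where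
  switched a b := match a, b with
    | .td t, .r r => memTriple r t ∧ t ∉ A
    | .r r, .td t => memTriple r t ∧ t ∉ A
    | _, _ => False
  theta a := match a with
    | .l => 0
    | .r _ => 3 / 4
    | .t t => 3 + (if t ∈ A then 3 / 4 else 0)
    | .tg t => 6 + (if t ∈ A then 3 / 4 else 0)
    | .td t => 3 - (if t ∈ A then 3 / 2 else 0)
  gen a := match a with
    | .t t => if t ∈ A then 3 else 0
    | .tg _ => 3
    | _ => 0
  dem a := match a with
    | .l => 3 * (Fintype.card (X × Y × Z) : ℝ) + (Fintype.card (X ⊕ Y ⊕ Z) : ℝ)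
    | _ => 0

theorem asgSol_cost {X Y Z : Type*} [Fintype X] [Fintype Y] [Fintype Z]
    (δ : X × Y × Z → ℕ) (A : Finset (X × Y × Z)) :
    ∑ v, (assignNet X Y Z δ).cost v * (asgSol A).gen v = ∑ t ∈ A, (δ t : ℝ) := by
  rw [busSum_split]
  simp only [assignNet, mkNet, asgSol, mul_zero, zero_mul, Finset.sum_const_zero, add_zero,
    zero_add]
  simp [← Finset.sum_filter]

theorem asgSol_cap {X Y Z : Type*} [Fintype X] [Fintype Y] [Fintype Z]
    (δ : X × Y × Z → ℕ) (A : Finset (X × Y × Z)) (a b : MBus X Y Z)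
    (hab : (assignNet X Y Z δ).adj a b) (hs : ¬ (asgSol A).switched a b) :
    |(assignNet X Y Z δ).sus a b * ((asgSol A).theta a - (asgSol A).theta b)| ≤
      (assignNet X Y Z δ).cap a b := by
  rcases a with _ | r | t | t | t <;> rcases b with _ | r' | t' | t' | t' <;>
    simp only [assignNet, mkNet, assignSpec, asgSol] at hab hs ⊢ <;> (try simp at hab)
  all_goals first
    | (have hA := not_and_not_right.mp hs hab
       simp only [hab, hA, if_true, Option.map_some, Option.getD_some, Option.map_none,
         Option.getD_none]
       rw [abs_le]; constructor <;> norm_num)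
    | (subst hab
       simp only [if_true, Option.map_some, Option.getD_some, Option.map_none, Option.getD_none]
       split_ifs <;> rw [abs_le] <;> constructor <;> norm_num)
    | (have hA := not_and_not_right.mp hs hab
       simp only [hab, hA, if_true, Option.map_some, Option.getD_some, Option.map_none,
         Option.getD_none]
       rw [abs_le]; constructor <;> norm_num)
    | (simp only [Option.map_some, Option.getD_some, Option.map_none, Option.getD_none]
       split_ifs <;> rw [abs_le] <;> constructor <;> norm_num)
    | (simp only [Option.map_some, Option.getD_some, Option.map_none, Option.getD_none]
       rw [abs_le] ; constructor <;> norm_num)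

theorem asgSol_kirchhoff {X Y Z : Type*} [Fintype X] [Fintype Y] [Fintype Z]
    (δ : X × Y × Z → ℕ) (A : Finset (X × Y × Z)) (hA : IsAssignment A) (v : MBus X Y Z) :
    (∑ b, if (assignNet X Y Z δ).adj v b ∧ ¬ (asgSol A).switched v b
      then (assignNet X Y Z δ).sus v b * ((asgSol A).theta v - (asgSol A).theta b) else 0)
      = (asgSol A).gen v - (asgSol A).dem v := by
  rw [busSum_split]
  rcases v with _ | r | t | t | t
  · have h := assign_card A hA
    simp only [assignNet, mkNet, assignSpec, asgSol]
    simp [-Fintype.card_sum, -Fintype.card_prod, Finset.sum_add_distrib]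
    have h2 : ∑ t : X × Y × Z, (if t ∈ A then (3 / 4 : ℝ) else 0)
        = 3 / 4 * ∑ t : X × Y × Z, (if t ∈ A then (1 : ℝ) else 0) := by
      rw [Finset.mul_sum]
      exact Finset.sum_congr rfl fun t _ => by split_ifs <;> norm_num
    simp at h2 h ⊢
    linarith
  · have h := assign_sum A hA r (3/4)
    simp only [assignNet, mkNet, assignSpec, asgSol]
    simp
    rw [Finset.sum_congr rfl (g := fun x => -(if memTriple r x ∧ x ∈ A then (3 / 4 : ℝ) else 0))]
    · rw [Finset.sum_neg_distrib, h]; norm_num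
    · intro x _
      by_cases h1 : memTriple r x <;> by_cases h2 : x ∈ A <;> simp [h1, h2] <;> norm_num
  · simp only [assignNet, mkNet, assignSpec, asgSol]
    simp
    split_ifs <;> norm_num
  · simp only [assignNet, mkNet, assignSpec, asgSol]
    simp
    norm_num
  · have h := memTriple_sum t (3/4)
    simp only [assignNet, mkNet, assignSpec, asgSol]
    simp [-Fintype.sum_sum_type]
    by_cases hA : t ∈ A
    · rw [Finset.sum_congr rfl (g := fun x => (if memTriple x t then (3 / 4 : ℝ) else 0))]
      · rw [h]; simp [hA]; norm_num
      · intro x _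
        by_cases h1 : memTriple x t <;> simp [h1, hA] <;> norm_num
    · rw [Finset.sum_eq_zero]
      · simp [hA]
      · intro x _
        by_cases h1 : memTriple x t <;> simp [h1, hA]

theorem asgSol_feasible {X Y Z : Type*} [Fintype X] [Fintype Y] [Fintype Z]
    (δ : X × Y × Z → ℕ) (A : Finset (X × Y × Z)) (hA : IsAssignment A) :
    (asgSol A).IsFeasible (assignNet X Y Z δ) := by
  refine ⟨?_, ?_, asgSol_cap δ A, ?_, ?_, asgSol_kirchhoff δ A hA⟩
  · intro a b h
    rcases a with _ | r | t | t | t <;> rcases b with _ | r' | t' | t' | t' <;>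
      simp only [asgSol] at h
    · simp [assignNet, mkNet, assignSpec, h.1]
    · simp [assignNet, mkNet, assignSpec, h.1]
  · intro a b h
    rcases a with _ | r | t | t | t <;> rcases b with _ | r' | t' | t' | t' <;>
      simp only [asgSol] at h ⊢ <;> exact h
  · intro v
    rcases v with _ | r | t | t | t
    · exact ⟨le_rfl, by simp only [asgSol]; positivity, le_rfl⟩
    all_goals simp [assignNet, mkNet, asgSol]
  · intro v
    rcases v with _ | r | t | t | t <;> simp only [assignNet, mkNet, asgSol]
    · simp
    · simp
    · split_ifs
      · exact ⟨by norm_num, by simp⟩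
      · simp
    · exact ⟨by norm_num, by rw [ENNReal.ofReal_ofNat]; norm_num⟩
    · simp

/-- For every assignment `A` of the minimum 3-dimensional assignment
instance `(X,Y,W,δ)` there is a feasible switching solution of `ANet(X,Y,W,δ)` whose
total generation cost equals the cost `∑ t ∈ A, δ t` of the assignment; in particular
`OTS(ANet(X,Y,W,δ)) ≤ M3DA(X,Y,W,δ)`. -/
theorem assignNet_ots_le_m3da (X Y Z : Type*) [Fintype X] [Fintype Y] [Fintype Z]
    (hcard : Fintype.card X = Fintype.card Y ∧ Fintype.card Y = Fintype.card Z)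
    (δ : X × Y × Z → ℕ) :
    (∀ A : Finset (X × Y × Z), IsAssignment A →
      ∃ S : LDCSolution (MBus X Y Z), S.IsFeasible (assignNet X Y Z δ) ∧
        ∑ v, (assignNet X Y Z δ).cost v * S.gen v = ∑ t ∈ A, (δ t : ℝ)) ∧
    (∀ ots m3da : ℝ,
      IsLeast {c : ℝ | ∃ S : LDCSolution (MBus X Y Z),
          S.IsFeasible (assignNet X Y Z δ) ∧
          c = ∑ v, (assignNet X Y Z δ).cost v * S.gen v} ots →
      IsLeast {c : ℝ | ∃ A : Finset (X × Y × Z), IsAssignment A ∧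
          c = ∑ t ∈ A, (δ t : ℝ)} m3da →
      ots ≤ m3da) := by
  have h1 : ∀ A : Finset (X × Y × Z), IsAssignment A →
      ∃ S : LDCSolution (MBus X Y Z), S.IsFeasible (assignNet X Y Z δ) ∧
        ∑ v, (assignNet X Y Z δ).cost v * S.gen v = ∑ t ∈ A, (δ t : ℝ) :=
    fun A hA => ⟨asgSol A, asgSol_feasible δ A hA, asgSol_cost δ A⟩
  refine ⟨h1, ?_⟩
  intro ots m3da ho hm
  obtain ⟨A, hA, hc⟩ := hm.1
  obtain ⟨S, hS, hcost⟩ := h1 A hA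
  exact ho.2 ⟨S, hS, by rw [hc, hcost]⟩
end
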